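/- Let d > 0, c ∈ ℝ and q ∈ ℕ with q ≥ 4. There exists a constant C ≥ 1, depending only on d, c and q, such that the following holds for every t ≥ 0 and δ ∈ (0,1]: if z(·,s) ∈ W^{1,1}(ℝ,ℂ) for each s ∈ [0,t] with s ↦ z(·,s) measurable, and ‖z(·,s)‖_{L¹} ≤ δ (1+s)^{−1/2}, ‖z(·,s)‖_{L^∞} ≤ δ and ‖∂_k z(·,s)‖_{L¹} ≤ δ for all s ∈ [0,t], then for j ∈ {0,1}: ∫_ℝ | k^j ∂_k ( ∫_0^t e^{−k² d (t−s) + i c k s} z^{*q}(k,s) ds ) | dk ≤ C δ² (1+t)^{−j/2}, where ∂_k denotes the weak derivative in k. -/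

import Mathlib

open MeasureTheory Real

noncomputable section

/-- `v'` is the weak derivative of `v : ℝ → ℂ`. -/
def HasWeakDeriv (v v' : ℝ → ℂ) : Prop :=
  LocallyIntegrable v volume ∧ LocallyIntegrable v' volume ∧
    ∀ φ : ℝ → ℝ, ContDiff ℝ (⊤ : ℕ∞) φ → HasCompactSupport φ →
      ∫ k, Complex.ofReal (deriv φ k) * v k = -∫ k, Complex.ofReal (φ k) * v' k

/-- convolution on `ℝ`. -/
def conv (f g : ℝ → ℂ) : ℝ → ℂ := fun k => ∫ ξ : ℝ, f (k - ξ) * g ξ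

/-- `convIter f m` is the `(m+1)`-fold convolution power of `f`;
in particular `convIter f (q-1) = f^{*q}` for `q ≥ 1`. -/
def convIter (f : ℝ → ℂ) : ℕ → ℝ → ℂ
  | 0 => f
  | m + 1 => conv (convIter f m) f

/-- `e^{x + iy}` for real `x, y`. -/
def expc (x y : ℝ) : ℂ := Complex.exp (Complex.ofReal x + Complex.ofReal y * Complex.I)

lemma integrable_ofReal_mul {g : ℝ → ℝ} {u : ℝ → ℂ} (hg : Continuous g)
    (hgc : HasCompactSupport g) (hu : LocallyIntegrable u) :
    Integrable (fun k => (g k : ℂ) * u k) := by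
  simpa using hu.integrable_smul_left_of_hasCompactSupport hg hgc

namespace HasWeakDeriv

/-- The defining identity of the weak derivative holds for complex-valued test functions. -/
lemma integral_deriv_mul {v v' : ℝ → ℂ} (h : HasWeakDeriv v v') {ψ : ℝ → ℂ}
    (hψ : ContDiff ℝ (⊤ : ℕ∞) ψ) (hc : HasCompactSupport ψ) :
    ∫ k, deriv ψ k * v k = -∫ k, ψ k * v' k := by
  obtain ⟨hv, hv', hw⟩ := h
  have hre : ContDiff ℝ (⊤ : ℕ∞) (fun k => (ψ k).re) := Complex.reCLM.contDiff.comp hψ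
  have him : ContDiff ℝ (⊤ : ℕ∞) (fun k => (ψ k).im) := Complex.imCLM.contDiff.comp hψ
  have hcre : HasCompactSupport (fun k => (ψ k).re) := hc.comp_left Complex.zero_re
  have hcim : HasCompactSupport (fun k => (ψ k).im) := hc.comp_left Complex.zero_im
  have hd : ∀ k, deriv ψ k = Complex.ofReal (deriv (fun k => (ψ k).re) k)
      + Complex.I * Complex.ofReal (deriv (fun k => (ψ k).im) k) := by
    intro k
    have h1 : HasDerivAt (fun k => ((ψ k).re : ℂ))
        (Complex.ofReal (deriv (fun k => (ψ k).re) k)) k :=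
      ((hre.differentiable (by simp)) k).hasDerivAt.ofReal_comp
    have h2 : HasDerivAt (fun k => ((ψ k).im : ℂ))
        (Complex.ofReal (deriv (fun k => (ψ k).im) k)) k :=
      ((him.differentiable (by simp)) k).hasDerivAt.ofReal_comp
    have h3 := h1.add (h2.const_mul Complex.I)
    rw [← h3.deriv]
    congr 1
    funext x
    simp [mul_comm Complex.I, Complex.re_add_im]
  have h1 : ∫ k, deriv ψ k * v k = (∫ k, Complex.ofReal (deriv (fun k => (ψ k).re) k) * v k)
      + Complex.I * ∫ k, Complex.ofReal (deriv (fun k => (ψ k).im) k) * v k := by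
    rw [← integral_const_mul, ← integral_add
      (integrable_ofReal_mul (hre.continuous_deriv (by simp)) hcre.deriv hv)
      ((integrable_ofReal_mul (him.continuous_deriv (by simp)) hcim.deriv hv).const_mul _)]
    refine integral_congr_ae (.of_forall fun k => ?_)
    simp only [hd]
    ring
  have h2 : ∫ k, ψ k * v' k = (∫ k, ((ψ k).re : ℂ) * v' k)
      + Complex.I * ∫ k, ((ψ k).im : ℂ) * v' k := by
    rw [← integral_const_mul, ← integral_add (integrable_ofReal_mul hre.continuous hcre hv')
      ((integrable_ofReal_mul him.continuous hcim hv').const_mul _)]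
    refine integral_congr_ae (.of_forall fun k => ?_)
    dsimp only
    conv_lhs => rw [← Complex.re_add_im (ψ k)]
    ring
  rw [h1, h2, hw _ hre hcre, hw _ him hcim]
  ring

/-- Product rule for a smooth factor. -/
lemma smooth_mul {v v' e e' : ℝ → ℂ} (h : HasWeakDeriv v v')
    (he : ContDiff ℝ (⊤ : ℕ∞) e) (hd : ∀ k, HasDerivAt e (e' k) k) :
    HasWeakDeriv (fun k => e k * v k) (fun k => e' k * v k + e k * v' k) := by
  have hce : Continuous e := he.continuous
  have hde : deriv e = e' := funext fun k => (hd k).deriv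
  have hce' : Continuous e' := hde ▸ he.continuous_deriv (by simp)
  have hl1 : LocallyIntegrable (fun k => e k * v k) := h.1.continuous_mul hce
  have hl2 : LocallyIntegrable (fun k => e' k * v k) := h.1.continuous_mul hce'
  have hl3 : LocallyIntegrable (fun k => e k * v' k) := h.2.1.continuous_mul hce
  refine ⟨hl1, hl2.add hl3, fun φ hφ hφc => ?_⟩
  have hφ' : ContDiff ℝ (⊤ : ℕ∞) (fun k => (φ k : ℂ)) := Complex.ofRealCLM.contDiff.comp hφ
  have hφc' : HasCompactSupport (fun k => (φ k : ℂ)) := hφc.comp_left Complex.ofReal_zero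
  have hder : ∀ k, deriv (fun k => (φ k : ℂ) * e k) k
      = Complex.ofReal (deriv φ k) * e k + (φ k : ℂ) * e' k := fun k =>
    ((((hφ.differentiable (by simp)) k).hasDerivAt.ofReal_comp).mul (hd k)).deriv
  have h0 := h.integral_deriv_mul (hφ'.mul he) hφc'.mul_right
  have i1 := integrable_ofReal_mul (hφ.continuous_deriv (by simp)) hφc.deriv hl1
  have i2 := integrable_ofReal_mul hφ.continuous hφc hl2
  have i3 := integrable_ofReal_mul hφ.continuous hφc hl3
  have e1 : ∫ k, deriv (fun k => (φ k : ℂ) * e k) k * v k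
      = (∫ k, Complex.ofReal (deriv φ k) * (e k * v k)) + ∫ k, (φ k : ℂ) * (e' k * v k) := by
    rw [← integral_add i1 i2]
    refine integral_congr_ae (.of_forall fun k => ?_)
    simp only [hder]
    ring
  have e2 : ∫ k, (φ k : ℂ) * (e' k * v k + e k * v' k)
      = (∫ k, (φ k : ℂ) * (e' k * v k)) + ∫ k, (φ k : ℂ) * e k * v' k := by
    simp only [mul_assoc]
    rw [← integral_add i2 i3]
    refine integral_congr_ae (.of_forall fun k => ?_)
    dsimp only
    ring
  rw [e2, eq_comm, neg_add, ← h0]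
  simp only [e1]
  ring

lemma const_mul {v v' : ℝ → ℂ} (h : HasWeakDeriv v v') (a : ℂ) :
    HasWeakDeriv (fun k => a * v k) (fun k => a * v' k) := by
  simpa using h.smooth_mul (e := fun _ => a) contDiff_const (fun k => hasDerivAt_const k a)

lemma comp_sub_right {v v' : ℝ → ℂ} (h : HasWeakDeriv v v') (hv : Integrable v)
    (hv' : Integrable v') (a : ℝ) :
    HasWeakDeriv (fun k => v (k - a)) (fun k => v' (k - a)) := by
  refine ⟨(hv.comp_sub_right a).locallyIntegrable, (hv'.comp_sub_right a).locallyIntegrable,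
    fun φ hφ hφc => ?_⟩
  have h0 := h.2.2 (fun k => φ (k + a)) (hφ.comp (contDiff_id.add contDiff_const))
    (hφc.comp_homeomorph (Homeomorph.addRight a))
  simp only [deriv_comp_add_const] at h0
  rw [← integral_sub_right_eq_self _ a, ← integral_sub_right_eq_self (fun k => _ * v' k) a] at h0
  simpa using h0

/-- Weak differentiation under the integral sign. -/
lemma integral {μ : Measure ℝ} [SFinite μ] {F F' : ℝ → ℝ → ℂ}
    (hF : Integrable (Function.uncurry F) (μ.prod volume))
    (hF' : Integrable (Function.uncurry F') (μ.prod volume))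
    (h : ∀ᵐ s ∂μ, HasWeakDeriv (F s) (F' s)) :
    HasWeakDeriv (fun k => ∫ s, F s k ∂μ) (fun k => ∫ s, F' s k ∂μ) := by
  refine ⟨hF.integral_prod_right.locallyIntegrable, hF'.integral_prod_right.locallyIntegrable,
    fun φ hφ hφc => ?_⟩
  have swap : ∀ {g : ℝ → ℝ} {H : ℝ → ℝ → ℂ}, Continuous g → HasCompactSupport g →
      Integrable (Function.uncurry H) (μ.prod volume) →
      ∫ k, (g k : ℂ) * ∫ s, H s k ∂μ = ∫ s, (∫ k, (g k : ℂ) * H s k) ∂μ := by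
    intro g H hg hgc hH
    obtain ⟨C, hC⟩ := hgc.exists_bound_of_continuous hg
    simp_rw [← integral_const_mul]
    refine (integral_integral_swap (f := fun s k => (g k : ℂ) * H s k) ?_).symm
    refine hH.bdd_mul (f := fun p : ℝ × ℝ => (g p.2 : ℂ)) (c := C) ?_ (.of_forall fun p => ?_)
    · exact (Complex.continuous_ofReal.comp (hg.comp continuous_snd)).aestronglyMeasurable
    · simpa using hC p.2
  rw [swap (hφ.continuous_deriv (by simp)) hφc.deriv hF, swap hφ.continuous hφc hF',
    ← integral_neg]
  refine integral_congr_ae ?_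
  filter_upwards [h] with s hs
  exact hs.2.2 φ hφ hφc

end HasWeakDeriv

lemma conv_eq_integral_sub (f g : ℝ → ℂ) (k : ℝ) : conv f g k = ∫ η, f η * g (k - η) := by
  rw [conv, ← integral_sub_left_eq_self _ _ k]
  simp

lemma integrable_conv_integrand {f g : ℝ → ℂ} (hf : Integrable f) (hg : Integrable g) :
    Integrable (Function.uncurry fun η k : ℝ => f η * g (k - η)) (volume.prod volume) := by
  have := (hf.convolution_integrand (ContinuousLinearMap.mul ℝ ℂ) hg).swap
  simpa [Function.comp_def, Function.uncurry_def] using this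

lemma integrable_conv {f g : ℝ → ℂ} (hf : Integrable f) (hg : Integrable g) :
    Integrable (conv f g) := by
  simpa only [funext (conv_eq_integral_sub f g), Function.uncurry_apply_pair] using
    (integrable_conv_integrand hf hg).integral_prod_right

/-- A convolution may be weakly differentiated in its second factor. -/
lemma HasWeakDeriv.conv_right {f g g' : ℝ → ℂ} (h : HasWeakDeriv g g') (hf : Integrable f)
    (hg : Integrable g) (hg' : Integrable g') : HasWeakDeriv (conv f g) (conv f g') := by
  simp only [funext (conv_eq_integral_sub f _)]
  exact HasWeakDeriv.integral (integrable_conv_integrand hf hg) (integrable_conv_integrand hf hg')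
    (.of_forall fun η => (h.comp_sub_right hg hg' η).const_mul (f η))

lemma integrable_convIter {f : ℝ → ℂ} (hf : Integrable f) : ∀ m, Integrable (convIter f m)
  | 0 => hf
  | m + 1 => integrable_conv (integrable_convIter hf m) hf

lemma measurable_conv {f g : ℝ → ℝ → ℂ} (hf : Measurable (Function.uncurry f))
    (hg : Measurable (Function.uncurry g)) :
    Measurable (Function.uncurry fun s => conv (f s) (g s)) := by
  have h : Measurable fun p : (ℝ × ℝ) × ℝ =>
      Function.uncurry f (p.1.1, p.1.2 - p.2) * Function.uncurry g (p.1.1, p.2) :=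
    (hf.comp (by fun_prop)).mul (hg.comp (by fun_prop))
  exact (h.stronglyMeasurable.integral_prod_right' (ν := volume)).measurable

lemma measurable_convIter {f : ℝ → ℝ → ℂ} (hf : Measurable (Function.uncurry f)) :
    ∀ m, Measurable (Function.uncurry fun s => convIter (f s) m)
  | 0 => hf
  | m + 1 => measurable_conv (measurable_convIter hf m) hf

lemma integral_norm_conv_le {f g : ℝ → ℂ} (hf : Integrable f) (hg : Integrable g) :
    ∫ k, ‖conv f g k‖ ≤ (∫ k, ‖f k‖) * ∫ k, ‖g k‖ := by
  have hi := (integrable_conv_integrand hf hg).norm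
  calc ∫ k, ‖conv f g k‖ ≤ ∫ k, ∫ η, ‖f η * g (k - η)‖ := by
        refine integral_mono (integrable_conv hf hg).norm hi.integral_prod_right fun k => ?_
        simp only [conv_eq_integral_sub]
        exact norm_integral_le_integral_norm _
    _ = ∫ η, ∫ k, ‖f η * g (k - η)‖ := (integral_integral_swap hi).symm
    _ = (∫ k, ‖f k‖) * ∫ k, ‖g k‖ := by
        simp only [norm_mul, integral_const_mul]
        simp only [integral_sub_right_eq_self fun x => ‖g x‖, integral_mul_const]

lemma norm_conv_le {f g : ℝ → ℂ} (hf : Integrable f) {M : ℝ} (hg : ∀ᵐ k, ‖g k‖ ≤ M) (k : ℝ) :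
    ‖conv f g k‖ ≤ (∫ k, ‖f k‖) * M := by
  have hi : Integrable fun ξ => ‖f (k - ξ)‖ * M := (hf.comp_sub_left k).norm.mul_const M
  calc ‖conv f g k‖ ≤ ∫ ξ, ‖f (k - ξ)‖ * M := by
        refine norm_integral_le_of_norm_le hi ?_
        filter_upwards [hg] with ξ h
        rw [norm_mul]
        gcongr
    _ = (∫ k, ‖f k‖) * M := by
        rw [integral_mul_const, integral_sub_left_eq_self fun x => ‖f x‖]

lemma integral_norm_convIter_le {f : ℝ → ℂ} (hf : Integrable f) :
    ∀ m, ∫ k, ‖convIter f m k‖ ≤ (∫ k, ‖f k‖) ^ (m + 1)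
  | 0 => by simp [convIter]
  | m + 1 => by
    rw [pow_succ]
    exact (integral_norm_conv_le (integrable_convIter hf m) hf).trans
      (mul_le_mul_of_nonneg_right (integral_norm_convIter_le hf m)
        (integral_nonneg fun _ => norm_nonneg _))

lemma abs_mul_exp_neg_mul_sq_le {a : ℝ} (ha : 0 < a) (k : ℝ) :
    |k| * exp (-(a * k ^ 2)) ≤ (√a)⁻¹ * exp (-(a / 2) * k ^ 2) := by
  have hs : 0 < √a := Real.sqrt_pos.2 ha
  have hsq : √a ^ 2 = a := Real.sq_sqrt ha.le
  have h1 : √a * |k| ≤ exp (a / 2 * k ^ 2) := by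
    have h2 := Real.add_one_le_exp (a / 2 * k ^ 2)
    have h3 : a * k ^ 2 = (√a * |k|) ^ 2 := by rw [mul_pow, sq_abs, hsq]
    nlinarith [sq_nonneg (√a * |k| - 1)]
  have h4 : exp (-(a / 2) * k ^ 2) = exp (a / 2 * k ^ 2) * exp (-(a * k ^ 2)) := by
    rw [← Real.exp_add]; ring_nf
  rw [h4, ← mul_assoc]
  refine mul_le_mul_of_nonneg_right ?_ (Real.exp_pos _).le
  rwa [inv_mul_eq_div, le_div_iff₀ hs, mul_comm]

lemma mul_sq_mul_exp_neg_mul_sq_le (a k : ℝ) :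
    a * k ^ 2 * exp (-(a * k ^ 2)) ≤ 2 * exp (-(a / 2) * k ^ 2) := by
  have h4 : exp (-(a / 2) * k ^ 2) = exp (a / 2 * k ^ 2) * exp (-(a * k ^ 2)) := by
    rw [← Real.exp_add]; ring_nf
  rw [h4, ← mul_assoc]
  refine mul_le_mul_of_nonneg_right ?_ (Real.exp_pos _).le
  linarith [Real.add_one_le_exp (a / 2 * k ^ 2)]

lemma lintegral_ofReal_le_of_le_gaussian {F : ℝ → ℝ} {W W' : ℝ → ℂ} {a A B D M N : ℝ}
    (ha : 0 < a) (hA : 0 ≤ A) (hB : 0 ≤ B) (hD : 0 ≤ D) (hW : Integrable W)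
    (hW' : Integrable W') (hM : ∫ k, ‖W k‖ ≤ M) (hN : ∫ k, ‖W' k‖ ≤ N)
    (h : ∀ k, F k ≤ A * exp (-(a / 2) * k ^ 2) + B * ‖W k‖ + D * ‖W' k‖) :
    ∫⁻ k, ENNReal.ofReal (F k) ≤ ENNReal.ofReal (A * (√(2 * π) * (√a)⁻¹) + B * M + D * N) := by
  have i1 : Integrable fun k : ℝ => A * exp (-(a / 2) * k ^ 2) :=
    (integrable_exp_neg_mul_sq (half_pos ha)).const_mul A
  have i2 : Integrable fun k : ℝ => B * ‖W k‖ := hW.norm.const_mul B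
  have i3 : Integrable fun k : ℝ => D * ‖W' k‖ := hW'.norm.const_mul D
  calc ∫⁻ k, ENNReal.ofReal (F k)
      ≤ ∫⁻ k, ENNReal.ofReal (A * exp (-(a / 2) * k ^ 2) + B * ‖W k‖ + D * ‖W' k‖) :=
        lintegral_mono fun k => ENNReal.ofReal_le_ofReal (h k)
    _ = ENNReal.ofReal (∫ k, (A * exp (-(a / 2) * k ^ 2) + B * ‖W k‖ + D * ‖W' k‖)) :=
        (ofReal_integral_eq_lintegral_ofReal ((i1.add i2).add i3)
          (.of_forall fun k => (by positivity :
            0 ≤ A * exp (-(a / 2) * k ^ 2) + B * ‖W k‖ + D * ‖W' k‖))).symm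
    _ ≤ _ := by
        refine ENNReal.ofReal_le_ofReal ?_
        rw [integral_add (i1.fun_add i2) i3, integral_add i1 i2, integral_const_mul,
          integral_const_mul, integral_const_mul, integral_gaussian]
        have : √(π / (a / 2)) = √(2 * π) * (√a)⁻¹ := by
          rw [← Real.sqrt_inv, ← Real.sqrt_mul (by positivity)]
          congr 1
          field_simp
        rw [this]
        gcongr

lemma norm_expc (x y : ℝ) : ‖expc x y‖ = exp x := by
  simp [expc, Complex.norm_exp]

lemma hasDerivAt_expc (d c t s k : ℝ) :
    HasDerivAt (fun k : ℝ => expc (-(k ^ 2 * d * (t - s))) (c * k * s))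
      (expc (-(k ^ 2 * d * (t - s))) (c * k * s) *
        ((-(2 * (d * (t - s)) * k) : ℝ) + (c * s : ℝ) * Complex.I)) k := by
  simp only [expc]
  refine HasDerivAt.cexp ?_
  have h1 : HasDerivAt (fun k : ℝ => -(k ^ 2 * d * (t - s))) (-(2 * (d * (t - s)) * k)) k := by
    refine (((hasDerivAt_pow 2 k).mul_const d).mul_const (t - s)).neg.congr_deriv ?_
    norm_num
    ring
  have h2 : HasDerivAt (fun k : ℝ => c * k * s) (c * s) k := by
    simpa using ((hasDerivAt_id k).const_mul c).mul_const s
  exact h1.ofReal_comp.add (h2.ofReal_comp.mul_const Complex.I)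

lemma contDiff_expc (d c t s : ℝ) :
    ContDiff ℝ (⊤ : ℕ∞) (fun k : ℝ => expc (-(k ^ 2 * d * (t - s))) (c * k * s)) := by
  simp only [expc]
  have h1 : ContDiff ℝ (⊤ : ℕ∞) fun k : ℝ => -(k ^ 2 * d * (t - s)) := by fun_prop
  have h2 : ContDiff ℝ (⊤ : ℕ∞) fun k : ℝ => c * k * s := by fun_prop
  exact ((Complex.ofRealCLM.contDiff.comp h1).add
    ((Complex.ofRealCLM.contDiff.comp h2).mul contDiff_const)).cexp

/-- Weighted `L¹` bounds for a function dominated as the derivative of a Gaussian times `W`. -/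
lemma lintegral_gaussian_deriv_le {D W W' : ℝ → ℂ} {a b M N : ℝ} (ha : 0 < a)
    (hW : Integrable W) (hW' : Integrable W') (hsup : ∀ k, ‖W k‖ ≤ M)
    (hN : ∫ k, ‖W k‖ ≤ N) (hM : ∫ k, ‖W' k‖ ≤ M)
    (h : ∀ k, ‖D k‖ ≤ (2 * a * |k| + |b|) * exp (-(a * k ^ 2)) * ‖W k‖
      + exp (-(a * k ^ 2)) * ‖W' k‖) :
    ∫⁻ k, ENNReal.ofReal ‖D k‖
        ≤ ENNReal.ofReal (M * (2 * √(2 * π) + |b| * √(2 * π) * (√a)⁻¹ + 1)) ∧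
      ∫⁻ k, ENNReal.ofReal (|k| * ‖D k‖)
        ≤ ENNReal.ofReal (M * (4 * √(2 * π) + 1) * (√a)⁻¹
          + |b| * min (√(2 * π) * M * (√a)⁻¹ ^ 2) (N * (√a)⁻¹)) := by
  have hM0 : 0 ≤ M := (norm_nonneg _).trans (hsup 0)
  have hs : 0 < √a := Real.sqrt_pos.2 ha
  have hg : ∀ k, exp (-(a * k ^ 2)) ≤ exp (-(a / 2) * k ^ 2) := fun k =>
    Real.exp_le_exp.2 (by nlinarith [sq_nonneg k])
  have hg1 : ∀ k, exp (-(a * k ^ 2)) ≤ 1 := fun k => Real.exp_le_one_iff.2 (by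
    nlinarith [sq_nonneg k])
  have hk := abs_mul_exp_neg_mul_sq_le ha
  have hk1 : ∀ k, |k| * exp (-(a * k ^ 2)) ≤ (√a)⁻¹ := fun k => (hk k).trans
    (mul_le_of_le_one_right (by positivity) (Real.exp_le_one_iff.2 (by nlinarith [sq_nonneg k])))
  have hk2 : ∀ k, 2 * a * |k| * |k| * exp (-(a * k ^ 2)) ≤ 4 * exp (-(a / 2) * k ^ 2) := by
    intro k
    have := mul_sq_mul_exp_neg_mul_sq_le a k
    rw [← sq_abs k] at this ⊢
    linarith
  have hdom : ∀ k, |k| * ‖D k‖ ≤ 4 * M * exp (-(a / 2) * k ^ 2)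
      + |b| * (|k| * exp (-(a * k ^ 2)) * ‖W k‖) + (√a)⁻¹ * ‖W' k‖ := by
    intro k
    calc |k| * ‖D k‖ ≤ |k| * ((2 * a * |k| + |b|) * exp (-(a * k ^ 2)) * ‖W k‖
          + exp (-(a * k ^ 2)) * ‖W' k‖) := by gcongr; exact h k
      _ = 2 * a * |k| * |k| * exp (-(a * k ^ 2)) * ‖W k‖
          + |b| * (|k| * exp (-(a * k ^ 2)) * ‖W k‖)
          + |k| * exp (-(a * k ^ 2)) * ‖W' k‖ := by ring
      _ ≤ 4 * exp (-(a / 2) * k ^ 2) * M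
          + |b| * (|k| * exp (-(a * k ^ 2)) * ‖W k‖) + (√a)⁻¹ * ‖W' k‖ := by
        gcongr ?_ * ?_ + _ + ?_ * _
        · exact hk2 k
        · exact hsup k
        · exact hk1 k
      _ = _ := by ring
  constructor
  · refine (lintegral_ofReal_le_of_le_gaussian (A := (2 * √a + |b|) * M) (B := 0) (D := 1) ha
      (by positivity) le_rfl zero_le_one hW hW' hN hM fun k => ?_).trans
      (ENNReal.ofReal_le_ofReal (le_of_eq ?_))
    · calc ‖D k‖ ≤ _ := h k
        _ = (2 * a * (|k| * exp (-(a * k ^ 2))) + |b| * exp (-(a * k ^ 2))) * ‖W k‖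
            + exp (-(a * k ^ 2)) * ‖W' k‖ := by ring
        _ ≤ (2 * a * ((√a)⁻¹ * exp (-(a / 2) * k ^ 2)) + |b| * exp (-(a / 2) * k ^ 2)) * M
            + 1 * ‖W' k‖ := by
          gcongr (_ * ?_ + _ * ?_) * ?_ + ?_ * _
          · exact hk k
          · exact hg k
          · exact hsup k
          · exact hg1 k
        _ = _ := by
          have : a * (√a)⁻¹ = √a := by rw [← div_eq_mul_inv, Real.div_sqrt]
          linear_combination 2 * exp (-(a / 2) * k ^ 2) * M * this
    · have : √a * (√a)⁻¹ = 1 := mul_inv_cancel₀ hs.ne'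
      linear_combination 2 * M * √(2 * π) * this
  · rcases min_choice (√(2 * π) * M * (√a)⁻¹ ^ 2) (N * (√a)⁻¹) with hmin | hmin <;> rw [hmin]
    · refine (lintegral_ofReal_le_of_le_gaussian (A := 4 * M + |b| * ((√a)⁻¹ * M)) (B := 0)
        (D := (√a)⁻¹) ha (by positivity) le_rfl (by positivity) hW hW' hN hM fun k => ?_).trans
        (ENNReal.ofReal_le_ofReal (le_of_eq ?_))
      · calc |k| * ‖D k‖ ≤ _ := hdom k
          _ ≤ 4 * M * exp (-(a / 2) * k ^ 2) + |b| * ((√a)⁻¹ * exp (-(a / 2) * k ^ 2) * M)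
              + (√a)⁻¹ * ‖W' k‖ := by
            gcongr _ + _ * (?_ * ?_) + _
            · exact hk k
            · exact hsup k
          _ = _ := by ring
      · ring
    · refine (lintegral_ofReal_le_of_le_gaussian (A := 4 * M) (B := |b| * (√a)⁻¹)
        (D := (√a)⁻¹) ha (by positivity) (by positivity) (by positivity) hW hW' hN hM
        fun k => ?_).trans (ENNReal.ofReal_le_ofReal (le_of_eq ?_))
      · calc |k| * ‖D k‖ ≤ _ := hdom k
          _ ≤ 4 * M * exp (-(a / 2) * k ^ 2) + |b| * ((√a)⁻¹ * ‖W k‖)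
              + (√a)⁻¹ * ‖W' k‖ := by
            gcongr _ + _ * (?_ * _) + _
            exact hk1 k
          _ = _ := by ring
      · ring

lemma inv_sqrt_eq_rpow {x : ℝ} (hx : 0 ≤ x) : (√x)⁻¹ = x ^ (-(1 : ℝ) / 2) := by
  rw [Real.sqrt_eq_rpow, ← Real.rpow_neg hx, neg_div]

lemma sqrt_add_le_sqrt_add_sqrt {x y : ℝ} (hx : 0 ≤ x) (hy : 0 ≤ y) : √(x + y) ≤ √x + √y := by
  rw [Real.sqrt_le_left (by positivity)]
  nlinarith [Real.sq_sqrt hx, Real.sq_sqrt hy, Real.sqrt_nonneg x, Real.sqrt_nonneg y,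
    mul_nonneg (Real.sqrt_nonneg x) (Real.sqrt_nonneg y)]

/-- The time integral controlling the Duhamel term is bounded uniformly in `t`. -/
lemma lintegral_decay_le (t : ℝ) :
    ∫⁻ s in Set.Ioo 0 t, ENNReal.ofReal ((√(1 + s))⁻¹ ^ 3 + (√(1 + s))⁻¹ * (√(t - s))⁻¹)
      ≤ ENNReal.ofReal 6 := by
  rcases le_or_gt t 0 with ht | ht
  · simp [Set.Ioo_eq_empty_of_le ht]
  have hst : 0 < √t := Real.sqrt_pos.2 ht
  have i1 : IntervalIntegrable (fun s : ℝ => (1 + s) ^ (-(3 : ℝ) / 2)) volume 0 t := by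
    refine ContinuousOn.intervalIntegrable fun s hs => ContinuousAt.continuousWithinAt ?_
    rw [Set.uIcc_of_le ht.le] at hs
    exact (continuousAt_const.add continuousAt_id).rpow_const (.inl
      (ne_of_gt (by linarith [hs.1] : 0 < 1 + s)))
  have i2 : IntervalIntegrable (fun s : ℝ => s ^ (-(1 : ℝ) / 2)) volume 0 t :=
    intervalIntegral.intervalIntegrable_rpow' (by norm_num)
  have i3 : IntervalIntegrable (fun s : ℝ => (t - s) ^ (-(1 : ℝ) / 2)) volume 0 t := by
    simpa using (i2.comp_sub_left t).symm
  have e1 : ∫ s in (0 : ℝ)..t, (1 + s) ^ (-(3 : ℝ) / 2) ≤ 2 := by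
    rw [intervalIntegral.integral_comp_add_left (fun x : ℝ => x ^ (-(3 : ℝ) / 2)) 1,
      integral_rpow (.inr ⟨by norm_num, ?_⟩)]
    · have : 0 ≤ (1 + t) ^ (-(3 : ℝ) / 2 + 1) := by positivity
      norm_num at this ⊢
      linarith
    · rw [Set.uIcc_of_le (by linarith)]
      intro h
      linarith [h.1]
  have e2 : ∫ s in (0 : ℝ)..t, s ^ (-(1 : ℝ) / 2) = 2 * √t := by
    rw [integral_rpow (.inl (by norm_num)), Real.sqrt_eq_rpow]
    norm_num
    ring
  have e3 : ∫ s in (0 : ℝ)..t, (t - s) ^ (-(1 : ℝ) / 2) = 2 * √t := by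
    rw [intervalIntegral.integral_comp_sub_left (fun x : ℝ => x ^ (-(1 : ℝ) / 2)) t]
    simpa using e2
  have i4 := i1.add ((i2.add i3).const_mul (√t)⁻¹)
  rw [restrict_Ioo_eq_restrict_Ioc]
  calc _ ≤ ∫⁻ s in Set.Ioc 0 t, ENNReal.ofReal ((1 + s) ^ (-(3 : ℝ) / 2)
        + (√t)⁻¹ * (s ^ (-(1 : ℝ) / 2) + (t - s) ^ (-(1 : ℝ) / 2))) := by
        refine setLIntegral_mono' measurableSet_Ioc fun s hs => ENNReal.ofReal_le_ofReal ?_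
        have hs0 : 0 < s := hs.1
        have h3 : (1 + s) ^ (-(3 : ℝ) / 2) = (√(1 + s))⁻¹ ^ 3 := by
          rw [inv_sqrt_eq_rpow (by linarith), ← Real.rpow_natCast, ← Real.rpow_mul (by linarith)]
          norm_num
        rw [h3, ← inv_sqrt_eq_rpow hs0.le, ← inv_sqrt_eq_rpow (by linarith [hs.2])]
        refine add_le_add le_rfl ?_
        rcases eq_or_lt_of_le hs.2 with rfl | hlt
        · simp only [sub_self, Real.sqrt_zero, inv_zero, mul_zero, add_zero]
          positivity
        have hsp : 0 < √s := Real.sqrt_pos.2 hs0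
        have htp : 0 < √(t - s) := Real.sqrt_pos.2 (by linarith)
        have htri : √t ≤ √s + √(t - s) := by
          simpa using sqrt_add_le_sqrt_add_sqrt hs0.le (sub_nonneg.2 hlt.le)
        calc (√(1 + s))⁻¹ * (√(t - s))⁻¹ ≤ (√s)⁻¹ * (√(t - s))⁻¹ := by
              gcongr
              linarith
          _ ≤ (√t)⁻¹ * ((√s)⁻¹ + (√(t - s))⁻¹) := by
              field_simp
              linarith
    _ = ENNReal.ofReal (∫ s in (0 : ℝ)..t, ((1 + s) ^ (-(3 : ℝ) / 2)
        + (√t)⁻¹ * (s ^ (-(1 : ℝ) / 2) + (t - s) ^ (-(1 : ℝ) / 2)))) := by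
        rw [intervalIntegral.integral_of_le ht.le, ofReal_integral_eq_lintegral_ofReal]
        · exact (intervalIntegrable_iff_integrableOn_Ioc_of_le ht.le).1 i4
        · refine (ae_restrict_iff' measurableSet_Ioc).2 (.of_forall fun s hs => ?_)
          have h1 : 0 ≤ 1 + s := by linarith [hs.1]
          have h2 : 0 ≤ s := hs.1.le
          have h3 : 0 ≤ t - s := sub_nonneg.2 hs.2
          simp only [Pi.zero_apply]
          positivity
    _ ≤ ENNReal.ofReal 6 := by
        refine ENNReal.ofReal_le_ofReal ?_
        rw [intervalIntegral.integral_add i1 ((i2.add i3).const_mul _),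
          intervalIntegral.integral_const_mul, intervalIntegral.integral_add i2 i3, e2, e3]
        have : (√t)⁻¹ * (2 * √t + 2 * √t) = 4 := by field_simp; norm_num
        linarith

/-- In the variables `u = (1+s)^{-1/2}`, `v = (t-s)^{-1/2}` the two decay rates agree up to the
factor `(1+t)^{-1/2}`. -/
lemma sqrt_mul_decay_le {t u v : ℝ} (hu : 0 < u) (hu1 : u ≤ 1) (hv : 0 < v)
    (h : √(1 + t) ≤ u⁻¹ + v⁻¹) :
    √(1 + t) * (v * u ^ 3 + min (u * v ^ 2) (u ^ 2 * v)) ≤ 3 * (u ^ 3 + u * v) := by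
  have h1 : u⁻¹ * (v * u ^ 3) = v * u ^ 2 := by field_simp
  have h2 : v⁻¹ * (v * u ^ 3) = u ^ 3 := by field_simp
  have h3 : u⁻¹ * (u ^ 2 * v) = u * v := by field_simp
  have h4 : v⁻¹ * (u * v ^ 2) = u * v := by field_simp
  have h5 : u⁻¹ * min (u * v ^ 2) (u ^ 2 * v) ≤ u * v := by
    rw [← h3]; gcongr; exact min_le_right _ _
  have h6 : v⁻¹ * min (u * v ^ 2) (u ^ 2 * v) ≤ u * v := by
    rw [← h4]; gcongr; exact min_le_left _ _
  have h7 : v * u ^ 2 ≤ u * v := by nlinarith [mul_pos hu hv]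
  have h8 : 0 < u ^ 3 := by positivity
  have h9 : 0 ≤ v * u ^ 3 + min (u * v ^ 2) (u ^ 2 * v) := by positivity
  nlinarith [mul_le_mul_of_nonneg_right h h9]

lemma integrable_uncurry_of_lintegral_le {μ : Measure ℝ} {H : ℝ → ℝ → ℂ}
    (hH : Measurable (Function.uncurry H)) {b : ℝ → ℝ}
    (h : ∀ᵐ s ∂μ, ∫⁻ k, ENNReal.ofReal ‖H s k‖ ≤ ENNReal.ofReal (b s))
    (hb : ∫⁻ s, ENNReal.ofReal (b s) ∂μ < ⊤) :
    Integrable (Function.uncurry H) (μ.prod volume) := by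
  refine ⟨hH.aestronglyMeasurable, ?_⟩
  rw [hasFiniteIntegral_iff_norm, lintegral_prod _ (by fun_prop)]
  exact (lintegral_mono_ae h).trans_lt hb

/-- Minkowski's inequality for a weighted `L¹` norm. -/
lemma lintegral_mul_norm_integral_le {μ : Measure ℝ} [SFinite μ] {H : ℝ → ℝ → ℂ}
    (hH : Measurable (Function.uncurry H)) {ρ : ℝ → ℝ} (hρ : Measurable ρ) (hρ0 : ∀ k, 0 ≤ ρ k) :
    ∫⁻ k, ENNReal.ofReal (ρ k * ‖∫ s, H s k ∂μ‖)
      ≤ ∫⁻ s, (∫⁻ k, ENNReal.ofReal (ρ k * ‖H s k‖)) ∂μ := by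
  rw [lintegral_lintegral_swap]
  · refine lintegral_mono fun k => ?_
    simp only [ENNReal.ofReal_mul (hρ0 k), ofReal_norm]
    rw [lintegral_const_mul' _ _ ENNReal.ofReal_ne_top]
    gcongr
    exact enorm_integral_le_lintegral_enorm _
  · exact (((hρ.comp measurable_snd).mul hH.norm).ennreal_ofReal).aemeasurable

/-- The `k`-derivative of `e^{-k²d(t-s)+icks} w(s,k)`, where `w' s` is the derivative of `w s`. -/
def duhamelDeriv (d c t : ℝ) (w w' : ℝ → ℝ → ℂ) (s k : ℝ) : ℂ :=
  expc (-(k ^ 2 * d * (t - s))) (c * k * s) *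
      ((-(2 * (d * (t - s)) * k) : ℝ) + (c * s : ℝ) * Complex.I) * w s k
    + expc (-(k ^ 2 * d * (t - s))) (c * k * s) * w' s k

/-- The constant in the estimate of `duhamelDeriv` at a fixed time. -/
def duhamelConst (d c : ℝ) : ℝ := (4 * √(2 * π) + 1) * (1 + (√d)⁻¹) ^ 2 * (1 + |c|)

lemma measurable_expc_mul (d c t : ℝ) {w : ℝ → ℝ → ℂ} (hw : Measurable (Function.uncurry w)) :
    Measurable (Function.uncurry fun s k =>
      expc (-(k ^ 2 * d * (t - s))) (c * k * s) * w s k) := by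
  refine Measurable.mul ?_ hw
  unfold expc
  fun_prop

lemma measurable_duhamelDeriv (d c t : ℝ) {w w' : ℝ → ℝ → ℂ}
    (hw : Measurable (Function.uncurry w)) (hw' : Measurable (Function.uncurry w')) :
    Measurable (Function.uncurry (duhamelDeriv d c t w w')) := by
  refine Measurable.add (Measurable.mul ?_ hw) (measurable_expc_mul d c t hw')
  unfold expc
  fun_prop

lemma norm_duhamelDeriv_le {d t s : ℝ} (hd : 0 ≤ d) (hs : s ≤ t) (c : ℝ) (w w' : ℝ → ℝ → ℂ)
    (k : ℝ) :
    ‖duhamelDeriv d c t w w' s k‖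
      ≤ (2 * (d * (t - s)) * |k| + |c * s|) * exp (-(d * (t - s) * k ^ 2)) * ‖w s k‖
        + exp (-(d * (t - s) * k ^ 2)) * ‖w' s k‖ := by
  have ha : 0 ≤ d * (t - s) := mul_nonneg hd (sub_nonneg.2 hs)
  have he : -(k ^ 2 * d * (t - s)) = -(d * (t - s) * k ^ 2) := by ring
  refine (norm_add_le _ _).trans ?_
  rw [norm_mul, norm_mul, norm_mul, norm_expc, he, mul_comm (exp _) ‖(_ + _ : ℂ)‖]
  gcongr
  refine (norm_add_le _ _).trans (le_of_eq ?_)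
  rw [norm_mul, Complex.norm_I, Complex.norm_real, Complex.norm_real, Real.norm_eq_abs,
    Real.norm_eq_abs, mul_one, abs_neg, abs_mul, abs_mul, abs_of_nonneg ha, abs_two]

lemma lintegral_duhamelDeriv_le {d c t s ε : ℝ} (hd : 0 < d) (hs0 : 0 ≤ s) (hst : s < t)
    (hε : 0 ≤ ε) {w w' : ℝ → ℝ → ℂ} (hw : Integrable (w s)) (hw' : Integrable (w' s))
    (hsup : ∀ k, ‖w s k‖ ≤ ε * (√(1 + s))⁻¹ ^ 3)
    (hN : ∫ k, ‖w s k‖ ≤ ε * (√(1 + s))⁻¹ ^ 4) (hM : ∫ k, ‖w' s k‖ ≤ ε * (√(1 + s))⁻¹ ^ 3)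
    {j : ℕ} (hj : j ≤ 1) :
    ∫⁻ k, ENNReal.ofReal (|k| ^ j * ‖duhamelDeriv d c t w w' s k‖)
      ≤ ENNReal.ofReal (3 * duhamelConst d c * ε * (√(1 + t))⁻¹ ^ j *
        ((√(1 + s))⁻¹ ^ 3 + (√(1 + s))⁻¹ * (√(t - s))⁻¹)) := by
  have hts : 0 < t - s := sub_pos.2 hst
  have h := lintegral_gaussian_deriv_le (mul_pos hd hts) hw hw' hsup hN hM
    (norm_duhamelDeriv_le hd.le hst.le c w w')
  have htri : √(1 + t) ≤ √(1 + s) + √(t - s) := by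
    simpa using sqrt_add_le_sqrt_add_sqrt (by linarith : 0 ≤ 1 + s) hts.le
  have hsu : s * (√(1 + s))⁻¹ ^ 2 ≤ 1 := by
    rw [inv_pow, Real.sq_sqrt (by linarith), ← div_eq_mul_inv, div_le_one (by linarith)]
    linarith
  have hu1 : (√(1 + s))⁻¹ ≤ 1 := inv_le_one_of_one_le₀ (Real.one_le_sqrt.2 (by linarith))
  have hu : 0 < (√(1 + s))⁻¹ := inv_pos.2 (Real.sqrt_pos.2 (by linarith))
  have hv : 0 < (√(t - s))⁻¹ := inv_pos.2 (Real.sqrt_pos.2 hts)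
  have hT : 0 < √(1 + t) := Real.sqrt_pos.2 (by linarith)
  rw [← inv_inv (√(1 + s)), ← inv_inv (√(t - s))] at htri
  rw [Real.sqrt_mul hd.le, mul_inv, abs_mul, abs_of_nonneg hs0] at h
  unfold duhamelConst
  set u := (√(1 + s))⁻¹
  set v := (√(t - s))⁻¹
  have hr : 0 < (√d)⁻¹ := inv_pos.2 (Real.sqrt_pos.2 hd)
  have hK : 0 ≤ √(2 * π) := Real.sqrt_nonneg _
  have hdecay := sqrt_mul_decay_le hu hu1 hv htri
  set r := (√d)⁻¹
  set K := √(2 * π)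
  have hc : 0 ≤ |c| := abs_nonneg c
  set B := (4 * K + 1) * (1 + r) ^ 2 * (1 + |c|) with hBdef
  have hB : B = (4 * K + 1) * (1 + |c|) + 2 * ((4 * K + 1) * r) + 8 * (K * r * |c|)
      + 2 * (r * |c|) + 4 * K * r ^ 2 + 4 * (|c| * K * r ^ 2) + r ^ 2 * (1 + |c|) := by
    rw [hBdef]; ring
  have p1 : 0 ≤ K * |c| := by positivity
  have p2 : 0 ≤ K * r := by positivity
  have p3 : 0 ≤ K * r * |c| := by positivity
  have p4 : 0 ≤ r * |c| := by positivity
  have p5 : 0 ≤ K * r ^ 2 := by positivity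
  have p6 : 0 ≤ |c| * K * r ^ 2 := by positivity
  have p7 : 0 ≤ r ^ 2 * (1 + |c|) := by positivity
  have b1 : 2 * K + 1 ≤ B := by rw [hB]; nlinarith
  have b2 : |c| * K * r ≤ B := by rw [hB]; nlinarith
  have b3 : (4 * K + 1) * r ≤ B := by rw [hB]; nlinarith
  have b4 : |c| * K * r ^ 2 ≤ B := by rw [hB]; nlinarith
  have b5 : |c| * r ≤ B := by rw [hB]; nlinarith
  have hB0 : 0 ≤ B := by linarith
  interval_cases j
  · simp only [pow_zero, one_mul, mul_one]
    refine h.1.trans (ENNReal.ofReal_le_ofReal ?_)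
    calc ε * u ^ 3 * (2 * K + |c| * s * K * (r * v) + 1)
        = ε * ((2 * K + 1) * u ^ 3 + |c| * K * r * ((s * u ^ 2) * (u * v))) := by ring
      _ ≤ ε * (B * u ^ 3 + B * (1 * (u * v))) := by gcongr
      _ ≤ 3 * (ε * (B * u ^ 3 + B * (1 * (u * v)))) := by
          have : 0 ≤ ε * (B * u ^ 3 + B * (1 * (u * v))) := by positivity
          linarith
      _ = 3 * B * ε * (u ^ 3 + u * v) := by ring
  · simp only [pow_one]
    refine h.2.trans (ENNReal.ofReal_le_ofReal ?_)
    have hmin : |c| * s * min (K * (ε * u ^ 3) * (r * v) ^ 2) (ε * u ^ 4 * (r * v))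
        ≤ ε * B * min (u * v ^ 2) (u ^ 2 * v) := by
      rw [mul_min_of_nonneg _ _ (by positivity), mul_min_of_nonneg _ _ (by positivity)]
      refine min_le_min ?_ ?_
      · calc |c| * s * (K * (ε * u ^ 3) * (r * v) ^ 2)
            = ε * (|c| * K * r ^ 2) * ((s * u ^ 2) * (u * v ^ 2)) := by ring
          _ ≤ ε * B * (1 * (u * v ^ 2)) := by gcongr
          _ = _ := by ring
      · calc |c| * s * (ε * u ^ 4 * (r * v))
            = ε * (|c| * r) * ((s * u ^ 2) * (u ^ 2 * v)) := by ring
          _ ≤ ε * B * (1 * (u ^ 2 * v)) := by gcongr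
          _ = _ := by ring
    calc ε * u ^ 3 * (4 * K + 1) * (r * v)
          + |c| * s * min (K * (ε * u ^ 3) * (r * v) ^ 2) (ε * u ^ 4 * (r * v))
        ≤ ε * B * (v * u ^ 3) + ε * B * min (u * v ^ 2) (u ^ 2 * v) := by
          refine add_le_add ?_ hmin
          calc ε * u ^ 3 * (4 * K + 1) * (r * v) = ε * ((4 * K + 1) * r) * (v * u ^ 3) := by ring
            _ ≤ ε * B * (v * u ^ 3) := by gcongr
      _ = ε * B * (√(1 + t))⁻¹ * (√(1 + t) * (v * u ^ 3 + min (u * v ^ 2) (u ^ 2 * v))) := by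
          field_simp
      _ ≤ ε * B * (√(1 + t))⁻¹ * (3 * (u ^ 3 + u * v)) := by gcongr
      _ = _ := by ring

/-- the weak `k`-derivative of the irrelevant oscillatory Duhamel term exists
and satisfies, for `q ≥ 4` and `j ∈ {0,1}`,
`∫ |k^j ∂_k (∫_0^t e^{-k²d(t-s)+icks} z^{*q}(k,s) ds)| dk ≤ C δ² (1+t)^{-j/2}`. -/
theorem irrelevant_convolution_power_derivative_estimate
    (d c : ℝ) (hd : 0 < d) (q : ℕ) (hq : 4 ≤ q) :
    ∃ C : ℝ, 1 ≤ C ∧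
      ∀ t : ℝ, 0 ≤ t → ∀ δ : ℝ, 0 < δ → δ ≤ 1 →
        ∀ z z' : ℝ → ℝ → ℂ,
          Measurable (Function.uncurry z) → Measurable (Function.uncurry z') →
          (∀ s ∈ Set.Icc (0 : ℝ) t,
            Integrable (z s) ∧ Integrable (z' s) ∧ HasWeakDeriv (z s) (z' s) ∧
            (∫ k : ℝ, ‖z s k‖) ≤ δ * (1 + s) ^ (-(1 : ℝ) / 2) ∧
            (∀ᵐ k : ℝ, ‖z s k‖ ≤ δ) ∧
            (∫ k : ℝ, ‖z' s k‖) ≤ δ) →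
          ∃ G' : ℝ → ℂ,
            HasWeakDeriv
              (fun k => ∫ s in (0 : ℝ)..t,
                expc (-(k ^ 2 * d * (t - s))) (c * k * s) * convIter (z s) (q - 1) k) G' ∧
            ∀ j : ℕ, j ≤ 1 →
              (∫ k : ℝ, |k| ^ j * ‖G' k‖) ≤ C * δ ^ 2 * (1 + t) ^ (-(j : ℝ) / 2) := by
  have hB : 0 ≤ duhamelConst d c := by
    unfold duhamelConst
    positivity
  refine ⟨18 * duhamelConst d c + 1, by linarith, ?_⟩
  intro t ht δ hδ hδ1 z z' hz hz' hyp
  obtain ⟨n, rfl⟩ : ∃ n, q = n + 4 := ⟨q - 4, by omega⟩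
  set w : ℝ → ℝ → ℂ := fun s => convIter (z s) (n + 3)
  set w' : ℝ → ℝ → ℂ := fun s => conv (convIter (z s) (n + 2)) (z' s)
  set μ : Measure ℝ := volume.restrict (Set.Ioo 0 t) with hμ
  have hwm : Measurable (Function.uncurry w) := measurable_convIter hz _
  have hwm' : Measurable (Function.uncurry w') := measurable_conv (measurable_convIter hz _) hz'
  have hDm := measurable_duhamelDeriv d c t hwm hwm'
  have hslice : ∀ s ∈ Set.Ioo 0 t, Integrable (w s) ∧ Integrable (w' s) ∧
      HasWeakDeriv (w s) (w' s) ∧ (∀ k, ‖w s k‖ ≤ δ ^ 2 * (√(1 + s))⁻¹ ^ 3) ∧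
      ∫ k, ‖w s k‖ ≤ δ ^ 2 * (√(1 + s))⁻¹ ^ 4 ∧ ∫ k, ‖w' s k‖ ≤ δ ^ 2 * (√(1 + s))⁻¹ ^ 3 := by
    intro s hs
    obtain ⟨hi, hi', hwd, h1, hinf, h1'⟩ := hyp s ⟨hs.1.le, hs.2.le⟩
    rw [← inv_sqrt_eq_rpow (by linarith [hs.1])] at h1
    have hu1 : (√(1 + s))⁻¹ ≤ 1 :=
      inv_le_one_of_one_le₀ (Real.one_le_sqrt.2 (by linarith [hs.1]))
    have hu0 : 0 ≤ (√(1 + s))⁻¹ := by positivity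
    set u := (√(1 + s))⁻¹
    have hδu : δ * u ≤ 1 := mul_le_one₀ hδ1 hu0 hu1
    have hnn : 0 ≤ ∫ k, ‖z s k‖ := integral_nonneg fun _ => norm_nonneg _
    have hic := integrable_convIter hi (n + 2)
    have hpow : ∀ m p : ℕ, 2 ≤ m → (∫ k, ‖z s k‖) ^ (m + p) ≤ δ ^ 2 * u ^ m := fun m p hm =>
      calc (∫ k, ‖z s k‖) ^ (m + p) ≤ (δ * u) ^ (m + p) := by gcongr
        _ ≤ (δ * u) ^ m := pow_le_pow_of_le_one (by positivity) hδu (by omega)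
        _ = δ ^ m * u ^ m := mul_pow _ _ _
        _ ≤ δ ^ 2 * u ^ m := by
          exact mul_le_mul_of_nonneg_right (pow_le_pow_of_le_one hδ.le hδ1 hm) (by positivity)
    have h3 : (∫ k, ‖convIter (z s) (n + 2) k‖) ≤ δ ^ 2 * u ^ 3 :=
      (integral_norm_convIter_le hi _).trans (by
        rw [show n + 2 + 1 = 3 + n by ring]
        exact hpow 3 n (by norm_num))
    have h3δ : (∫ k, ‖convIter (z s) (n + 2) k‖) * δ ≤ δ ^ 2 * u ^ 3 :=
      (mul_le_of_le_one_right (integral_nonneg fun _ => norm_nonneg _) hδ1).trans h3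
    refine ⟨integrable_convIter hi _, integrable_conv hic hi', hwd.conv_right hic hi hi',
      fun k => (norm_conv_le hic hinf k).trans h3δ, ?_, ?_⟩
    · refine (integral_norm_convIter_le hi _).trans ?_
      rw [show n + 3 + 1 = 4 + n by ring]
      exact hpow 4 n (by norm_num)
    · refine (integral_norm_conv_le hic hi').trans (le_trans ?_ h3δ)
      gcongr
  have hbound : ∀ j ≤ 1, ∀ᵐ s ∂μ,
      ∫⁻ k, ENNReal.ofReal (|k| ^ j * ‖duhamelDeriv d c t w w' s k‖)
        ≤ ENNReal.ofReal (3 * duhamelConst d c * δ ^ 2 * (√(1 + t))⁻¹ ^ j *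
          ((√(1 + s))⁻¹ ^ 3 + (√(1 + s))⁻¹ * (√(t - s))⁻¹)) := by
    intro j hj
    refine ae_restrict_of_forall_mem measurableSet_Ioo fun s hs => ?_
    obtain ⟨hi, hi', -, hsup, hN, hM⟩ := hslice s hs
    exact lintegral_duhamelDeriv_le hd hs.1.le hs.2 (by positivity) hi hi' hsup hN hM hj
  have htime : ∀ j : ℕ, ∫⁻ s, ENNReal.ofReal (3 * duhamelConst d c * δ ^ 2 * (√(1 + t))⁻¹ ^ j *
      ((√(1 + s))⁻¹ ^ 3 + (√(1 + s))⁻¹ * (√(t - s))⁻¹)) ∂μ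
        ≤ ENNReal.ofReal (3 * duhamelConst d c * δ ^ 2 * (√(1 + t))⁻¹ ^ j * 6) := by
    intro j
    have h0 : 0 ≤ 3 * duhamelConst d c * δ ^ 2 * (√(1 + t))⁻¹ ^ j := by positivity
    simp only [ENNReal.ofReal_mul h0]
    rw [lintegral_const_mul' _ _ ENNReal.ofReal_ne_top]
    gcongr
    exact lintegral_decay_le t
  have hDint : Integrable (Function.uncurry (duhamelDeriv d c t w w')) (μ.prod volume) :=
    integrable_uncurry_of_lintegral_le hDm (by simpa using hbound 0 (by norm_num))
      ((by simpa using htime 0 : _ ≤ _).trans_lt ENNReal.ofReal_lt_top)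
  have hFint : Integrable (Function.uncurry fun s k =>
      expc (-(k ^ 2 * d * (t - s))) (c * k * s) * w s k) (μ.prod volume) := by
    refine integrable_uncurry_of_lintegral_le (b := fun _ => 1) (measurable_expc_mul d c t hwm)
      (ae_restrict_of_forall_mem measurableSet_Ioo fun s hs => ?_) (by simp [hμ])
    obtain ⟨hi, -, -, -, hN, -⟩ := hslice s hs
    have hu1 : (√(1 + s))⁻¹ ≤ 1 :=
      inv_le_one_of_one_le₀ (Real.one_le_sqrt.2 (by linarith [hs.1]))
    calc ∫⁻ k, ENNReal.ofReal ‖expc (-(k ^ 2 * d * (t - s))) (c * k * s) * w s k‖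
        ≤ ∫⁻ k, ENNReal.ofReal ‖w s k‖ := by
          refine lintegral_mono fun k => ENNReal.ofReal_le_ofReal ?_
          rw [norm_mul, norm_expc]
          refine mul_le_of_le_one_left (norm_nonneg _) (Real.exp_le_one_iff.2 ?_)
          have := sub_pos.2 hs.2
          rw [neg_nonpos]
          positivity
      _ = ENNReal.ofReal (∫ k, ‖w s k‖) :=
          (ofReal_integral_eq_lintegral_ofReal hi.norm (.of_forall fun _ => norm_nonneg _)).symm
      _ ≤ ENNReal.ofReal 1 := by
          refine ENNReal.ofReal_le_ofReal (hN.trans ?_)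
          exact mul_le_one₀ (pow_le_one₀ hδ.le hδ1) (by positivity)
            (pow_le_one₀ (by positivity) hu1)
  have hweak : HasWeakDeriv
      (fun k => ∫ s, expc (-(k ^ 2 * d * (t - s))) (c * k * s) * w s k ∂μ)
      (fun k => ∫ s, duhamelDeriv d c t w w' s k ∂μ) :=
    HasWeakDeriv.integral hFint hDint (ae_restrict_of_forall_mem measurableSet_Ioo fun s hs =>
      (hslice s hs).2.2.1.smooth_mul (contDiff_expc d c t s) (hasDerivAt_expc d c t s))
  refine ⟨fun k => ∫ s, duhamelDeriv d c t w w' s k ∂μ, ?_, fun j hj => ?_⟩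
  · simp only [intervalIntegral.integral_of_le ht, ← restrict_Ioo_eq_restrict_Ioc]
    exact hweak
  · have hρ : Measurable fun k : ℝ => |k| ^ j := by fun_prop
    rw [integral_eq_lintegral_of_nonneg_ae
      (.of_forall fun k => mul_nonneg (pow_nonneg (abs_nonneg k) j) (norm_nonneg _))
      (hρ.aestronglyMeasurable.fun_mul hweak.2.1.aestronglyMeasurable.norm)]
    have hrate : (√(1 + t))⁻¹ ^ j = (1 + t) ^ (-(j : ℝ) / 2) := by
      rw [inv_sqrt_eq_rpow (by linarith), ← Real.rpow_natCast, ← Real.rpow_mul (by linarith)]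
      congr 1
      ring
    rw [← hrate]
    refine ENNReal.toReal_le_of_le_ofReal (by positivity) ?_
    refine (lintegral_mul_norm_integral_le hDm hρ fun k => by positivity).trans
      ((lintegral_mono_ae (hbound j hj)).trans ((htime j).trans (ENNReal.ofReal_le_ofReal ?_)))
    have : 0 ≤ δ ^ 2 * (√(1 + t))⁻¹ ^ j := by positivity
    linarith
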